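/- Let Ω ⊆ ℍ be open, θ ∈ [0,2π), u ∈ ℍ, and let f : Ω → ℍ be of class C¹. Then for every z ∈ Ω, ${}^θ𝒟_r[\,e^{⟨u,·⟩_θ} f\,](z) = e^{⟨u,z⟩_θ}\,\big({}^θ𝒟_r f(z) + f(z)\,u\big) = e^{⟨u,z⟩_θ}\,{}^θ𝒟_{r,u} f(z)$. -/

import Mathlib

open MeasureTheory

noncomputable section

/-- The real quaternions `ℍ`. -/
abbrev H4 : Type := Quaternion ℝ

instance : MeasurableSpace H4 := borel _
instance : BorelSpace H4 := ⟨rfl⟩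

/-- The quaternion unit `i`. -/
def qI : H4 := ⟨0, 1, 0, 0⟩
/-- The quaternion unit `j`. -/
def qJ : H4 := ⟨0, 0, 1, 0⟩
/-- `e^{iθ} = cos θ + (sin θ) i` as a quaternion. -/
def eIθ (θ : ℝ) : H4 := ⟨Real.cos θ, Real.sin θ, 0, 0⟩
/-- The basis direction `i e^{iθ} j`. -/
def e2 (θ : ℝ) : H4 := qI * eIθ θ * qJ
/-- The basis direction `e^{iθ} j`. -/
def e3 (θ : ℝ) : H4 := eIθ θ * qJ

/-- Third θ-coordinate of a quaternion `z = x₀ + x₁ i + x₂ (i e^{iθ} j) + x₃ (e^{iθ} j)`. -/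
def x2θ (θ : ℝ) (z : H4) : ℝ := -z.imJ * Real.sin θ + z.imK * Real.cos θ
/-- Fourth θ-coordinate of a quaternion. -/
def x3θ (θ : ℝ) (z : H4) : ℝ := z.imJ * Real.cos θ + z.imK * Real.sin θ

/-- The θ-inner product `⟨u,z⟩_θ`: the dot product of θ-coordinates. -/
def innerθ (θ : ℝ) (u z : H4) : ℝ :=
  u.re * z.re + u.imI * z.imI + x2θ θ u * x2θ θ z + x3θ θ u * x3θ θ z

/-- Left θ-Cauchy–Riemann operator
`{}^θ𝒟 f = ∂f/∂x₀ + i ∂f/∂x₁ + (i e^{iθ} j) ∂f/∂x₂ + (e^{iθ} j) ∂f/∂x₃`. -/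
def Dl (θ : ℝ) (f : H4 → H4) (z : H4) : H4 :=
  fderiv ℝ f z 1 + qI * fderiv ℝ f z qI + e2 θ * fderiv ℝ f z (e2 θ) +
    e3 θ * fderiv ℝ f z (e3 θ)

/-- Left (θ,u)-Cauchy–Riemann operator `{}^θ_u𝒟 f = {}^θ𝒟 f + u f`. -/
def Dlu (θ : ℝ) (u : H4) (f : H4 → H4) (z : H4) : H4 := Dl θ f z + u * f z

/-- Right θ-Cauchy–Riemann operator. -/
def Dr (θ : ℝ) (f : H4 → H4) (z : H4) : H4 :=
  fderiv ℝ f z 1 + fderiv ℝ f z qI * qI + fderiv ℝ f z (e2 θ) * e2 θ +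
    fderiv ℝ f z (e3 θ) * e3 θ

/-- Right (θ,u)-Cauchy–Riemann operator `{}^θ𝒟_{r,u} f = {}^θ𝒟_r f + f u`. -/
def Dru (θ : ℝ) (u : H4) (f : H4 → H4) (z : H4) : H4 := Dr θ f z + f z * u

/-- Embedding of ℂ into the quaternions, `ℂ ≅ ℝ + ℝi ⊂ ℍ`. -/
def toH (a : ℂ) : H4 := ⟨a.re, a.im, 0, 0⟩

/-- First complex θ-component of a quaternion: `z₁ = x₀ + x₁ i`. -/
def c1 (z : H4) : ℂ := ⟨z.re, z.imI⟩
/-- Second complex θ-component of a quaternion: `z₂ = x₂ + x₃ i`. -/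
def c2 (θ : ℝ) (z : H4) : ℂ := ⟨x2θ θ z, x3θ θ z⟩

/-- Wirtinger operator `∂/∂z̄₁ = ∂/∂x₀ + i ∂/∂x₁` on ℂ-valued functions. -/
def db1 (f : H4 → ℂ) (z : H4) : ℂ := fderiv ℝ f z 1 + Complex.I * fderiv ℝ f z qI
/-- Wirtinger operator `∂/∂z̄₂ = ∂/∂x₂ + i ∂/∂x₃` on ℂ-valued functions. -/
def db2 (θ : ℝ) (f : H4 → ℂ) (z : H4) : ℂ :=
  fderiv ℝ f z (e2 θ) + Complex.I * fderiv ℝ f z (e3 θ)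
/-- Wirtinger operator `∂/∂z₂ = ∂/∂x₂ − i ∂/∂x₃` on ℂ-valued functions. -/
def dz2 (θ : ℝ) (f : H4 → ℂ) (z : H4) : ℂ :=
  fderiv ℝ f z (e2 θ) - Complex.I * fderiv ℝ f z (e3 θ)

/-- `e^{iθ}` as a complex number. -/
def cexpI (θ : ℝ) : ℂ := ⟨Real.cos θ, Real.sin θ⟩

/-!
For every `θ` the vectors `1, i, ie^{iθ}j, e^{iθ}j` form an orthonormal basis of `ℍ`, so `⟨·,·⟩_θ`
is the usual inner product. Since the components of a gradient along an orthonormal basis reassemble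
the gradient, the right Cauchy–Riemann operator satisfies `𝒟_r (g f) = g 𝒟_r f + f ∇g` for
real-valued `g`; the gradient of `e^{⟨u,·⟩}` is `e^{⟨u,·⟩} u`.
-/

open scoped Quaternion RealInnerProductSpace

section InnerProductSpace

variable {E : Type*} [NormedAddCommGroup E] [InnerProductSpace ℝ E]

lemma hasGradientAt_exp_inner [CompleteSpace E] (u z : E) :
    HasGradientAt (fun w => Real.exp ⟪u, w⟫) (Real.exp ⟪u, z⟫ • u) z := by
  rw [hasGradientAt_iff_hasFDerivAt, map_smul]
  exact (InnerProductSpace.toDual ℝ E u).hasFDerivAt.exp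

variable {ι F G : Type*} [Fintype ι] [NormedAddCommGroup F] [NormedSpace ℝ F]
  [AddCommGroup G] [Module ℝ G]

/-- The Dirac-type operator `f ↦ ∑ₖ B (∂f/∂bₖ) bₖ` of an orthonormal basis `b`, where the bilinear
map `B` stands for the right multiplication of values of `f` by vectors. -/
def diracOp (b : OrthonormalBasis ι ℝ E) (B : F →ₗ[ℝ] E →ₗ[ℝ] G) (f : E → F) (z : E) : G :=
  ∑ k, B (fderiv ℝ f z (b k)) (b k)

lemma diracOp_smul [CompleteSpace E] (b : OrthonormalBasis ι ℝ E) (B : F →ₗ[ℝ] E →ₗ[ℝ] G)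
    {g : E → ℝ} {g' z : E} {f : E → F} (hg : HasGradientAt g g' z) (hf : DifferentiableAt ℝ f z) :
    diracOp b B (fun w => g w • f w) z = g z • diracOp b B f z + B (f z) g' := by
  have leibniz (v : E) :
      fderiv ℝ (fun w => g w • f w) z v = g z • fderiv ℝ f z v + ⟪v, g'⟫ • f z := by
    simp [fderiv_fun_smul hg.differentiableAt hf, hg.fderiv_apply, real_inner_comm]
  calc diracOp b B (fun w => g w • f w) z
      = g z • diracOp b B f z + B (f z) (∑ k, ⟪b k, g'⟫ • b k) := by
        simp only [diracOp, leibniz, map_add, map_smul, LinearMap.add_apply, LinearMap.smul_apply,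
          Finset.sum_add_distrib, Finset.smul_sum, map_sum]
    _ = g z • diracOp b B f z + B (f z) g' := by rw [b.sum_repr']

end InnerProductSpace

lemma inner_eq_sum_coords (a b : H4) :
    ⟪a, b⟫ = a.re * b.re + a.imI * b.imI + a.imJ * b.imJ + a.imK * b.imK := by
  simp [Quaternion.inner_def]

lemma e2_eq (θ : ℝ) : e2 θ = ⟨0, 0, -Real.sin θ, Real.cos θ⟩ := by
  ext <;> simp only [e2, Quaternion.re_mul, Quaternion.imI_mul, Quaternion.imJ_mul,
    Quaternion.imK_mul] <;> simp [qI, qJ, eIθ]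

lemma e3_eq (θ : ℝ) : e3 θ = ⟨0, 0, Real.cos θ, Real.sin θ⟩ := by
  ext <;> simp only [e3, Quaternion.re_mul, Quaternion.imI_mul, Quaternion.imJ_mul,
    Quaternion.imK_mul] <;> simp [qJ, eIθ]

lemma innerθ_eq_inner (θ : ℝ) (u z : H4) : innerθ θ u z = ⟪u, z⟫ := by
  rw [inner_eq_sum_coords, innerθ, x2θ, x2θ, x3θ, x3θ]
  linear_combination (u.imJ * z.imJ + u.imK * z.imK) * Real.sin_sq_add_cos_sq θ

lemma orthonormal_one_qI_e2_e3 (θ : ℝ) : Orthonormal ℝ ![1, qI, e2 θ, e3 θ] := by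
  rw [orthonormal_iff_ite]
  intro k l
  rw [inner_eq_sum_coords, e2_eq, e3_eq]
  fin_cases k <;> fin_cases l <;> simp [qI, ← sq, mul_comm]

/-- The orthonormal basis `1, i, ie^{iθ}j, e^{iθ}j` of `ℍ` underlying the θ-coordinates; `Dr θ`
differentiates along its vectors. -/
def basisθ (θ : ℝ) : OrthonormalBasis (Fin 4) ℝ H4 :=
  OrthonormalBasis.mk (orthonormal_one_qI_e2_e3 θ)
    ((orthonormal_one_qI_e2_e3 θ).linearIndependent.span_eq_top_of_card_eq_finrank'
      Quaternion.finrank_eq_four.symm).ge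

lemma coe_basisθ (θ : ℝ) : ⇑(basisθ θ) = ![1, qI, e2 θ, e3 θ] :=
  OrthonormalBasis.coe_mk _ _

lemma Dr_eq_diracOp (θ : ℝ) : Dr θ = diracOp (basisθ θ) (LinearMap.mul ℝ H4) := by
  funext f z
  simp [Dr, diracOp, coe_basisθ, Fin.sum_univ_four]

lemma Dr_smul (θ : ℝ) {g : H4 → ℝ} {g' z : H4} {f : H4 → H4} (hg : HasGradientAt g g' z)
    (hf : DifferentiableAt ℝ f z) :
    Dr θ (fun w => g w • f w) z = g z • Dr θ f z + f z * g' := by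
  rw [Dr_eq_diracOp]
  exact diracOp_smul _ _ hg hf

theorem statement1_general (θ : ℝ) (u : H4) (f : H4 → H4) (z : H4) (hf : DifferentiableAt ℝ f z) :
    Dr θ (fun w => Real.exp (innerθ θ u w) • f w) z = Real.exp (innerθ θ u z) • Dru θ u f z := by
  simp only [innerθ_eq_inner, Dru]
  rw [Dr_smul θ (hasGradientAt_exp_inner u z) hf, mul_smul_comm, smul_add]

/-- `{}^θ𝒟_r[e^{⟨u,·⟩_θ} f](z) = e^{⟨u,z⟩_θ}({}^θ𝒟_r f(z) + f(z) u) = e^{⟨u,z⟩_θ} {}^θ𝒟_{r,u} f(z)`. -/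
theorem statement1 (Ω : Set H4) (hΩ : IsOpen Ω) (θ : ℝ) (hθ : θ ∈ Set.Ico 0 (2 * Real.pi))
    (u : H4) (f : H4 → H4) (hf : ContDiffOn ℝ 1 f Ω) :
    ∀ z ∈ Ω,
      Dr θ (fun w => Real.exp (innerθ θ u w) • f w) z
          = Real.exp (innerθ θ u z) • (Dr θ f z + f z * u) ∧
      Dr θ (fun w => Real.exp (innerθ θ u w) • f w) z
          = Real.exp (innerθ θ u z) • Dru θ u f z := by
  intro z hz
  have h := statement1_general θ u f z
    ((hf.contDiffAt (hΩ.mem_nhds hz)).differentiableAt one_ne_zero)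
  exact ⟨h, h⟩

end
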